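/- Let μ be a finite signed Borel measure on [-1,0] with |μ|([-1,0]) ≥ 1. Then for every ε > 0 there exists a Borel-measurable function φ : [-1,0] → [-1,0] with sup_{θ∈[-1,0]} |φ(θ) − θ| < ε such that the pushforward measure φ_*μ is purely atomic, supported on finitely many points −τ_0, …, −τ_r with τ_0, …, τ_r rationally independent, and Σ_j |(φ_*μ)({−τ_j})| ≥ 1. -/

import Mathlib

open MeasureTheory

/-- Real numbers `τ_0, …, τ_r` are rationally independent if no nontrivial rational linear
combination of them vanishes. -/
def RatIndep {r : ℕ} (τ : Fin (r + 1) → ℝ) : Prop :=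
  ∀ q : Fin (r + 1) → ℚ, (∑ j, (q j : ℝ) * τ j) = 0 → ∀ j, q j = 0

theorem exists_indep (k : ℕ) (a b : Fin k → ℝ) (h : ∀ j, a j < b j) :
    ∃ τ : Fin k → ℝ, LinearIndependent ℚ τ ∧ ∀ j, τ j ∈ Set.Ioo (a j) (b j) := by
  induction k with
  | zero => exact ⟨fun _ => 0, linearIndependent_empty_type, fun j => j.elim0⟩
  | succ k ih =>
    obtain ⟨τ, hτ, hm⟩ := ih (fun j => a j.succ) (fun j => b j.succ) (fun j => h j.succ)
    have hc : (Submodule.span ℚ (Set.range τ) : Set ℝ).Countable := by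
      have : Set.range (fun q : Fin k → ℚ => ∑ j, q j • τ j) =
          (Submodule.span ℚ (Set.range τ) : Set ℝ) := by
        ext x
        simp only [Set.mem_range, SetLike.mem_coe, Submodule.mem_span_range_iff_exists_fun]
      rw [← this]
      exact Set.countable_range _
    obtain ⟨x, hx, hxn⟩ : ∃ x ∈ Set.Ioo (a 0) (b 0),
        x ∉ (Submodule.span ℚ (Set.range τ) : Set ℝ) := by
      by_contra! hcon
      have h1 := Cardinal.mk_Ioo_real (h 0)
      have h2 := (hc.mono hcon).le_aleph0
      rw [h1] at h2
      exact absurd h2 (not_le.mpr Cardinal.aleph0_lt_continuum)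
    refine ⟨Fin.cons x τ, linearIndependent_finCons.mpr ⟨hτ, hxn⟩, fun j => ?_⟩
    refine Fin.cases ?_ (fun i => ?_) j
    · simpa using hx
    · simpa using hm i

theorem sm_apply (μ : SignedMeasure ℝ) {A : Set ℝ} (hA : MeasurableSet A) :
    μ A = (μ.toJordanDecomposition.posPart A).toReal
      - (μ.toJordanDecomposition.negPart A).toReal := by
  conv_lhs => rw [← SignedMeasure.toSignedMeasure_toJordanDecomposition μ]
  rw [JordanDecomposition.toSignedMeasure]
  rw [sub_apply, Measure.toSignedMeasure_apply_measurable hA,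
    Measure.toSignedMeasure_apply_measurable hA]
  rfl

theorem tv_zero (ν : SignedMeasure ℝ) {S : Set ℝ} (hS : MeasurableSet S)
    (h : ∀ A, MeasurableSet A → A ⊆ S → ν A = 0) : ν.totalVariation S = 0 := by
  obtain ⟨s, hs, hp, hn⟩ := ν.toJordanDecomposition.mutuallySingular
  have e1 := h (S \ s) (hS.diff hs) Set.sdiff_subset
  have e2 := h (S ∩ s) (hS.inter hs) Set.inter_subset_left
  rw [sm_apply ν (hS.diff hs), measure_mono_null (fun x hx => hx.2) hn] at e1
  rw [sm_apply ν (hS.inter hs), measure_mono_null Set.inter_subset_right hp] at e2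
  simp only [ENNReal.toReal_zero, sub_zero, zero_sub, neg_eq_zero, ENNReal.toReal_eq_zero_iff,
    measure_ne_top, or_false] at e1 e2
  rw [SignedMeasure.totalVariation, Measure.add_apply, ← measure_inter_add_sdiff S hs,
    ← measure_inter_add_sdiff (μ := ν.toJordanDecomposition.negPart) S hs, e1, e2,
    measure_mono_null Set.inter_subset_right hp, measure_mono_null (fun x hx => hx.2) hn]
  simp

theorem abs_eq_tv (μ : SignedMeasure ℝ) {A s : Set ℝ} (hA : MeasurableSet A)
    (hp : μ.toJordanDecomposition.posPart s = 0)
    (hn : μ.toJordanDecomposition.negPart sᶜ = 0) (h : A ⊆ s ∨ A ⊆ sᶜ) :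
    μ.totalVariation A = ENNReal.ofReal |μ A| := by
  rw [sm_apply μ hA, SignedMeasure.totalVariation, Measure.add_apply]
  rcases h with h | h
  · rw [measure_mono_null h hp]
    simp
  · rw [measure_mono_null h hn]
    simp

/-- if `μ` is a finite signed Borel measure supported on `[-1,0]` with
`|μ|([-1,0]) ≥ 1`, then for every `ε > 0` there is a Borel-measurable
`φ : [-1,0] → [-1,0]` with `sup |φ − id| < ε` such that `φ_*μ` is purely atomic, supported
on finitely many points `−τ_0, …, −τ_r` with `τ_0, …, τ_r` rationally independent, and
`Σ_j |(φ_*μ)({−τ_j})| ≥ 1`. -/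
theorem stmt7 (μ : SignedMeasure ℝ)
    (hsupp : μ.totalVariation (Set.Icc (-1:ℝ) 0)ᶜ = 0)
    (h1 : 1 ≤ μ.totalVariation (Set.Icc (-1:ℝ) 0)) :
    ∀ ε > (0:ℝ), ∃ φ : ℝ → ℝ, Measurable φ ∧
      Set.MapsTo φ (Set.Icc (-1) 0) (Set.Icc (-1) 0) ∧
      (∀ θ ∈ Set.Icc (-1:ℝ) 0, |φ θ - θ| < ε) ∧
      ∃ (r : ℕ) (τ : Fin (r + 1) → ℝ), RatIndep τ ∧
        (∀ j, -τ j ∈ Set.Icc (-1:ℝ) 0) ∧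
        (SignedMeasure.totalVariation (μ.map φ)) {x : ℝ | ∃ j, x = -τ j}ᶜ = 0 ∧
        1 ≤ ∑ j, |(μ.map φ) {-τ j}| := by
  intro ε hε
  obtain ⟨M, hM⟩ := exists_nat_one_div_lt hε
  have hM0 : (0:ℝ) < (M:ℝ) + 1 := by positivity
  obtain ⟨s, hs, hp, hn⟩ := μ.toJordanDecomposition.mutuallySingular
  classical
  obtain ⟨τ, hτ, hτm⟩ := exists_indep (2 * M + 1 + 1)
    (fun j => ((j.val / 2 : ℕ) : ℝ) / (M + 1)) (fun j => (((j.val / 2 : ℕ) : ℝ) + 1) / (M + 1))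
    (fun j => by gcongr; linarith)
  have hinj : Function.Injective τ := hτ.injective
  let h : ℝ → ℕ := fun θ => 2 * min ⌊-θ * (M + 1)⌋₊ M + if θ ∈ s then 1 else 0
  have hh : Measurable h := by
    have : Measurable (fun θ : ℝ => if θ ∈ s then 1 else 0 : ℝ → ℕ) :=
      Measurable.ite hs measurable_const measurable_const
    have h2 : Measurable (fun θ : ℝ => ⌊-θ * (M + 1)⌋₊) :=
      Nat.measurable_floor.comp (by fun_prop)
    exact ((h2.min measurable_const).const_mul 2).add this
  have hlt : ∀ θ, h θ < 2 * M + 1 + 1 := by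
    intro θ
    simp only [h]
    split_ifs <;> omega
  let g : ℝ → Fin (2 * M + 1 + 1) := fun θ => Fin.ofNat _ (h θ)
  have hg : Measurable g := (Measurable.of_discrete (f := Fin.ofNat (2 * M + 1 + 1))).comp hh
  have hgv : ∀ θ, (g θ).val = h θ := fun θ => Nat.mod_eq_of_lt (hlt θ)
  have hgs : ∀ θ, θ ∈ s ↔ (g θ).val % 2 = 1 := by
    intro θ
    rw [hgv]
    simp only [h]
    split_ifs with hc <;> simp [hc] <;> omega
  have hg2 : ∀ θ, (g θ).val / 2 = min ⌊-θ * (M + 1)⌋₊ M := by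
    intro θ
    rw [hgv]
    simp only [h]
    split_ifs <;> omega
  have hφ : Measurable (fun θ => -τ (g θ)) :=
    (Measurable.of_discrete (f := fun j => -τ j)).comp hg
  have hτI : ∀ j, -τ j ∈ Set.Icc (-1:ℝ) 0 := by
    intro j
    obtain ⟨h1, h2⟩ := hτm j
    have h3 : (((j.val / 2 : ℕ) : ℝ) + 1) / (M + 1) ≤ 1 := by
      rw [div_le_one hM0]
      have : j.val / 2 ≤ M := by omega
      have : ((j.val / 2 : ℕ) : ℝ) ≤ M := by exact_mod_cast this
      linarith
    have h4 : (0:ℝ) ≤ ((j.val / 2 : ℕ) : ℝ) / (M + 1) := by positivity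
    constructor <;> linarith
  refine ⟨fun θ => -τ (g θ), hφ, fun θ _ => hτI _, ?_, 2 * M + 1, τ, ?_, hτI, ?_, ?_⟩
  · intro θ hθ
    obtain ⟨h1, h2⟩ := hτm (g θ)
    simp only [hg2] at h1 h2
    set m := min ⌊-θ * (M + 1)⌋₊ M with hm
    have hpos : 0 ≤ -θ * ((M:ℝ) + 1) := mul_nonneg (by linarith [hθ.2]) hM0.le
    have a1 : (m:ℝ) / (M + 1) ≤ -θ := by
      rw [div_le_iff₀ hM0]
      exact le_trans (Nat.cast_le.mpr (min_le_left _ _)) (Nat.floor_le hpos)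
    have a2 : -θ ≤ ((m:ℝ) + 1) / (M + 1) := by
      rw [le_div_iff₀ hM0]
      rcases min_choice ⌊-θ * (M + 1)⌋₊ M with hc | hc
      · rw [hm, hc]
        exact (Nat.lt_floor_add_one _).le
      · rw [hm, hc]
        nlinarith [hθ.1]
    rw [add_div] at a2 h2
    rw [abs_lt]
    constructor <;> linarith
  · intro q hq
    exact Fintype.linearIndependent_iff.mp hτ q (by simpa [Rat.smul_def] using hq)
  · have hfin : {x : ℝ | ∃ j, x = -τ j}.Finite := by
      refine (Set.finite_range (fun j => -τ j)).subset ?_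
      rintro x ⟨j, rfl⟩
      exact ⟨j, rfl⟩
    refine tv_zero _ hfin.measurableSet.compl ?_
    intro A hA hAS
    rw [VectorMeasure.map_apply _ hφ hA]
    convert VectorMeasure.empty μ
    ext θ
    simp only [Set.mem_preimage, Set.mem_empty_iff_false, iff_false]
    intro hc
    exact hAS hc ⟨_, rfl⟩
  · have hpre : ∀ j, (μ.map (fun θ => -τ (g θ))) {-τ j} = μ (g ⁻¹' {j}) := by
      intro j
      rw [VectorMeasure.map_apply _ hφ (measurableSet_singleton _)]
      congr 1
      ext θ
      simp [hinj.eq_iff]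
    simp only [hpre]
    have hgm : ∀ j, MeasurableSet (g ⁻¹' {j}) := fun j => hg (measurableSet_singleton j)
    have key : μ.totalVariation Set.univ = ENNReal.ofReal (∑ j, |μ (g ⁻¹' {j})|) := by
      rw [ENNReal.ofReal_sum_of_nonneg (fun _ _ => abs_nonneg _)]
      have := sum_measure_preimage_singleton (μ := μ.totalVariation) Finset.univ (f := g)
        (fun j _ => hgm j)
      rw [Finset.coe_univ, Set.preimage_univ] at this
      rw [← this]
      refine Finset.sum_congr rfl fun j _ => abs_eq_tv μ (hgm j) hp hn ?_
      by_cases hj : j.val % 2 = 1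
      · left
        rintro θ rfl
        exact (hgs θ).2 hj
      · right
        rintro θ rfl hc
        exact hj ((hgs θ).1 hc)
    have := h1.trans (measure_mono (Set.subset_univ _))
    rw [key] at this
    simpa using this
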